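/- In the abstract semilinear setting, assume additionally that for every t the map f(t,·) : Y → W is Fréchet differentiable with derivative Df(t,x) ∈ L(Y;W), that Df : ℝ × Y → L(Y;W) is continuous, and that for every R > 0 there exist C₂(R) > 0 and λ₂(R) > 0 such that sup_{t∈ℝ} ‖f(t, x + h) − f(t, x) − Df(t,x)h‖_W ≤ C₂(R)‖h‖_Y² whenever ‖x‖_Y ≤ R and ‖h‖_Y ≤ λ₂(R), and sup_{t∈ℝ} ‖Df(t,x)‖_{L(Y;W)} ≤ C₂(R) whenever ‖x‖_Y ≤ R. Then for every R, T > 0 there exist constants C₃(R,T) > 0 and λ₃(R,T) > 0 with the following property. Whenever x : [t₀, t₀ + T] → Y is a mild solution with ‖x(t)‖_Y ≤ R for all t ∈ [t₀, t₀ + T], then: (i) for every h⁰ ∈ Y there exists a unique continuous h : [t₀, t₀ + T] → Y with h(t) = S_{t−t₀} h⁰ + ∫_{t₀}^t T_{t−s}(Df(s, x(s)) h(s)) ds for all t; (ii) for each t, the map V(t) : h⁰ ↦ h(t) is a bounded linear operator on Y with ‖V(t)‖_{L(Y)} ≤ C₃(R,T); (iii) for every h⁰ ∈ Y with ‖h⁰‖_Y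 ≤ λ₃(R,T), the mild solution y on [t₀, t₀ + T] with y(t₀) = x(t₀) + h⁰ exists and satisfies ‖y(t) − x(t) − V(t)h⁰‖_Y ≤ C₃(R,T)‖h⁰‖_Y² for every t ∈ [t₀, t₀ + T]; in particular, for each t the map x⁰ ↦ (value at t of the mild solution starting at x⁰) is Fréchet differentiable at x(t₀) with derivative V(t). -/

import Mathlib

/-!
All three assertions concern Duhamel equations `z(t) = p(t) + ∫ K(t-s) (φ s) ds` whose kernel `K` is
integrable in operator norm near `0`. In the norm `sup exp(-μ(t-t₀)) ‖z(t)‖` the Duhamel operator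
has norm at most `∫₀ᵀ exp(-μ r) ‖K(r)‖ dr`, which tends to `0` as `μ → ∞`; equivalently, damping
turns the kernel into one of small mass. For small mass, existence of solutions is the contraction
principle and the Gronwall bound is a maximum argument, with constants independent of `t₀` and `x`.

Existence for the forcing `Df(s, x(s)) z` produces the variational solution, and the Gronwall bound
its uniqueness, hence its linearity in the initial datum. Existence for the forcing
`f(s, x(s) + z) - f(s, x(s))`, Lipschitz on the unit ball, produces `y = x + z` with `‖z‖ ≤ A ‖h⁰‖`.
Finally `z - V h⁰` solves the variational equation with zero initial datum and an additional
forcing bounded by `C₂ ‖z‖²`, so the Gronwall bound gives the quadratic estimate.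
-/

open MeasureTheory Set

/-- A mild (Duhamel) solution on `[t₀, t₀ + T]` with initial datum `x0` of the abstract
semilinear problem `x' = Lx + f(t,x)`, where `S` is the semigroup generated by `L` on `Y`
and `T'` is its extension acting from `W` into `Y`:  a continuous function
`x : [t₀, t₀+T] → Y` satisfying `x t = S (t−t₀) x0 + ∫_{t₀}^t T' (t−s) (f s (x s)) ds`. -/
def IsMildSolution {Y W : Type*} [NormedAddCommGroup Y] [NormedSpace ℝ Y]
    [NormedAddCommGroup W] [NormedSpace ℝ W]
    (S : ℝ → Y →L[ℝ] Y) (T' : ℝ → W →L[ℝ] Y) (f : ℝ → Y → W)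
    (t₀ T : ℝ) (x0 : Y) (x : ℝ → Y) : Prop :=
  ContinuousOn x (Set.Icc t₀ (t₀ + T)) ∧ x t₀ = x0 ∧
    (∀ t ∈ Set.Icc t₀ (t₀ + T),
      IntervalIntegrable (fun s => T' (t - s) (f s (x s))) MeasureTheory.volume t₀ t) ∧
    ∀ t ∈ Set.Icc t₀ (t₀ + T),
      x t = S (t - t₀) x0 + ∫ s in t₀..t, T' (t - s) (f s (x s))

open Filter Function Metric
open scoped Topology NNReal

section StronglyContinuousFamily

variable {X 𝕜 E F : Type*} [TopologicalSpace X] [NormedAddCommGroup E] [NormedAddCommGroup F]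

lemma exists_opNorm_le_of_isCompact [NontriviallyNormedField 𝕜] [NormedSpace 𝕜 E]
    [NormedSpace 𝕜 F] [CompleteSpace E] {G : X → E →L[𝕜] F} {s : Set X} (hs : IsCompact s)
    (hG : ∀ v, ContinuousOn (fun t => G t v) s) : ∃ C > 0, ∀ t ∈ s, ‖G t‖ ≤ C := by
  obtain ⟨C, hC⟩ := banach_steinhaus (g := fun t : s => G t) fun v =>
    (hs.exists_bound_of_continuousOn (hG v)).imp fun _ h t => h t t.2
  exact ⟨max C 1, by positivity, fun t ht => (hC ⟨t, ht⟩).trans (le_max_left _ _)⟩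

lemma continuousOn_apply_of_forall_continuousOn [NontriviallyNormedField 𝕜] [NormedSpace 𝕜 E]
    [NormedSpace 𝕜 F] [CompleteSpace E] [LocallyCompactSpace X] {G : X → E →L[𝕜] F} {s : Set X}
    (hs : IsOpen s) (hG : ∀ v, ContinuousOn (fun t => G t v) s) {w : X → E}
    (hw : ContinuousOn w s) : ContinuousOn (fun t => G t (w t)) s := by
  intro t₀ ht₀
  obtain ⟨K, hKt₀, hKs, hK⟩ := local_compact_nhds (hs.mem_nhds ht₀)
  obtain ⟨C, -, hC⟩ := exists_opNorm_le_of_isCompact hK fun v => (hG v).mono hKs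
  have hdiff : Tendsto (fun t => G t (w t - w t₀)) (𝓝[s] t₀) (𝓝 0) := by
    have hbound : Tendsto (fun t => C * ‖w t - w t₀‖) (𝓝[s] t₀) (𝓝 0) := by
      simpa using ((hw t₀ ht₀).sub_const (w t₀)).norm.const_mul C
    refine squeeze_zero_norm' ?_ hbound
    filter_upwards [mem_nhdsWithin_of_mem_nhds hKt₀] with t ht
    exact (G t).le_of_opNorm_le (hC t ht) _
  simpa [ContinuousWithinAt] using hdiff.add (hG (w t₀) t₀ ht₀)

lemma lowerSemicontinuous_opNorm [DenselyNormedField 𝕜] [NormedSpace 𝕜 E] [NormedSpace 𝕜 F]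
    {G : X → E →L[𝕜] F} (hG : ∀ v, Continuous fun t => G t v) :
    LowerSemicontinuous fun t => ‖G t‖ := by
  intro t c hc
  obtain ⟨v, hv, hcv⟩ := (G t).exists_lt_apply_of_lt_opNorm hc
  filter_upwards [(hG v).norm.continuousAt.eventually (lt_mem_nhds hcv)] with u hu
  exact hu.trans_le ((G u).unit_le_opNorm v hv.le)

end StronglyContinuousFamily

lemma exists_isFixedPt_mem_closedBall {α : Type*} [MetricSpace α] [CompleteSpace α]
    {Φ : α → α} {c : ℝ≥0} {x₀ : α} {r : ℝ} (hΦ : LipschitzOnWith c Φ (closedBall x₀ r))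
    (hc : c < 1) (hx₀ : dist (Φ x₀) x₀ ≤ (1 - c) * r) :
    ∃ x ∈ closedBall x₀ r, IsFixedPt Φ x := by
  have hr : 0 ≤ r := nonneg_of_mul_nonneg_right (dist_nonneg.trans hx₀) (sub_pos.2 hc)
  have hmaps : MapsTo Φ (closedBall x₀ r) (closedBall x₀ r) := fun x hx => calc
    dist (Φ x) x₀ ≤ dist (Φ x) (Φ x₀) + dist (Φ x₀) x₀ := dist_triangle _ _ _
    _ ≤ c * r + (1 - c) * r := by
      gcongr
      exact (hΦ.dist_le_mul x hx x₀ (mem_closedBall_self hr)).trans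
        (mul_le_mul_of_nonneg_left hx c.2)
    _ = r := by ring
  obtain ⟨x, hx, hfix, -⟩ := ContractingWith.exists_fixedPoint' isClosed_closedBall.isComplete hmaps
    ⟨hc, hΦ.mapsToRestrict hmaps⟩ (mem_closedBall_self hr) (edist_ne_top _ _)
  exact ⟨x, hx, hfix⟩

lemma exists_opNorm_comp_sub_le {E F : Type*} [NormedAddCommGroup E] [NormedSpace ℝ E]
    [CompleteSpace E] [NormedAddCommGroup F] [NormedSpace ℝ F] {S : ℝ → E →L[ℝ] F} {T : ℝ}
    (hS : ∀ v, ContinuousOn (fun t => S t v) (Ici 0)) :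
    ∃ M > 0, ∀ t₀, (∀ v, ContinuousOn (fun t => S (t - t₀) v) (Icc t₀ (t₀ + T))) ∧
      ∀ t ∈ Icc t₀ (t₀ + T), ‖S (t - t₀)‖ ≤ M := by
  have hS' (v : E) : ContinuousOn (fun t => S t v) (Icc 0 T) := (hS v).mono Icc_subset_Ici_self
  obtain ⟨M, hM, hSM⟩ := exists_opNorm_le_of_isCompact isCompact_Icc hS'
  have hshift (t₀ : ℝ) : MapsTo (fun t => t - t₀) (Icc t₀ (t₀ + T)) (Icc 0 T) := fun t ht =>
    ⟨sub_nonneg.2 ht.1, by linarith [ht.2]⟩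
  exact ⟨M, hM, fun t₀ => ⟨fun v => (hS' v).comp (by fun_prop) (hshift t₀),
    fun t ht => hSM _ (hshift t₀ ht)⟩⟩

lemma lipschitzOnWith_comp_id_prodMk {X E F : Type*} [TopologicalSpace X] [CompactSpace X]
    [PseudoMetricSpace E] [PseudoMetricSpace F] {G : C(X × E, F)} {L : ℝ≥0} {c : E} {r : ℝ}
    (hG : ∀ x, LipschitzOnWith L (fun y => G (x, y)) (closedBall c r)) :
    LipschitzOnWith L (fun u : C(X, E) => G.comp ((ContinuousMap.id X).prodMk u))
      (closedBall (ContinuousMap.const X c) r) := by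
  refine LipschitzOnWith.of_dist_le_mul fun u hu v hv => ?_
  rw [ContinuousMap.dist_le (by positivity)]
  have hball {w : C(X, E)} (hw : w ∈ closedBall (ContinuousMap.const X c) r) (x : X) :
      w x ∈ closedBall c r :=
    (ContinuousMap.dist_apply_le_dist x).trans hw
  exact fun x => ((hG x).dist_le_mul _ (hball hu x) _ (hball hv x)).trans
    (mul_le_mul_of_nonneg_left (ContinuousMap.dist_apply_le_dist x) L.2)

lemma lipschitzOnWith_smul_comp_inv_smul {E F : Type*} [NormedAddCommGroup E] [NormedSpace ℝ E]
    [NormedAddCommGroup F] [NormedSpace ℝ F] {g : E → F} {L : ℝ≥0} {c r : ℝ} (hc : 0 < c)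
    (hg : LipschitzOnWith L g (closedBall 0 (c⁻¹ * r))) :
    LipschitzOnWith L (fun y => c • g (c⁻¹ • y)) (closedBall 0 r) := by
  have hball {y : E} (hy : y ∈ closedBall 0 r) : c⁻¹ • y ∈ closedBall 0 (c⁻¹ * r) := by
    rw [mem_closedBall_zero_iff] at hy ⊢
    rw [norm_smul, Real.norm_of_nonneg (inv_nonneg.2 hc.le)]
    gcongr
  refine LipschitzOnWith.of_dist_le_mul fun y hy y' hy' => ?_
  calc dist (c • g (c⁻¹ • y)) (c • g (c⁻¹ • y'))
      = c * dist (g (c⁻¹ • y)) (g (c⁻¹ • y')) := by rw [dist_smul₀, Real.norm_of_nonneg hc.le]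
    _ ≤ c * (L * dist (c⁻¹ • y) (c⁻¹ • y')) := by
      gcongr
      exact hg.dist_le_mul _ (hball hy) _ (hball hy')
    _ = L * dist y y' := by
      rw [dist_smul₀, Real.norm_of_nonneg (inv_nonneg.2 hc.le)]
      field_simp

lemma lipschitzOnWith_closedBall_of_hasFDerivAt {E F : Type*} [NormedAddCommGroup E]
    [NormedSpace ℝ E] [NormedAddCommGroup F] [NormedSpace ℝ F] {g : E → F} {g' : E → E →L[ℝ] F}
    {L : ℝ≥0} {x : E} {R r : ℝ} (hg : ∀ y, HasFDerivAt g (g' y) y)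
    (hg' : ∀ y, ‖y‖ ≤ R + r → ‖g' y‖ ≤ L) (hx : ‖x‖ ≤ R) : LipschitzOnWith L g (closedBall x r) :=
  (convex_closedBall _ _).lipschitzOnWith_of_nnnorm_hasFDerivWithin_le
    (fun y _ => (hg y).hasFDerivWithinAt)
    fun y hy => hg' y ((norm_le_of_mem_closedBall hy).trans (by gcongr))

section Duhamel

variable {Y W : Type*} [NormedAddCommGroup Y] [NormedSpace ℝ Y]
  [NormedAddCommGroup W] [NormedSpace ℝ W]

/-- Operator families `K` for which the Duhamel integral `∫ K (t - s) (φ s) ds` of a continuous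
`φ` converges: strongly continuous on `(0, ∞)`, with a possible integrable singularity at `0`. -/
structure IsDuhamelKernel (K : ℝ → W →L[ℝ] Y) : Prop where
  continuousOn_apply : ∀ w, ContinuousOn (fun r => K r w) (Ioi 0)
  integrableOn_norm : ∀ b, IntegrableOn (fun r => ‖K r‖) (Ioc 0 b)

namespace IsDuhamelKernel

variable {K : ℝ → W →L[ℝ] Y} {t₀ t T : ℝ}

lemma of_norm_le {k : ℝ → ℝ} (hK : ∀ w, ContinuousOn (fun r => K r w) (Ioi 0))
    (hk : ∀ b, IntegrableOn k (Ioc 0 b)) (hKk : ∀ r, 0 < r → ‖K r‖ ≤ k r) :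
    IsDuhamelKernel K := by
  refine ⟨hK, fun b => (hk b).mono' ?_ ?_⟩
  · have hmeas : Measurable fun r : Ioi (0 : ℝ) => ‖K r‖ := (lowerSemicontinuous_opNorm fun w =>
      continuousOn_iff_continuous_domRestrict.1 (hK w)).measurable
    exact (aemeasurable_restrict_of_measurable_subtype measurableSet_Ioi
      hmeas).aestronglyMeasurable.mono_set Ioc_subset_Ioi_self
  · filter_upwards [ae_restrict_mem measurableSet_Ioc] with r hr
    simpa using hKk r hr.1

lemma of_norm_le_exp_mul_rpow {M κ γ : ℝ} (hK : ∀ w, ContinuousOn (fun r => K r w) (Ioi 0))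
    (hγ : γ < 1) (hKM : ∀ r, 0 < r → ‖K r‖ ≤ M * Real.exp (κ * r) * r ^ (-γ)) :
    IsDuhamelKernel K := by
  refine of_norm_le hK (fun b => ?_) hKM
  have hpow : IntervalIntegrable (fun r : ℝ => r ^ (-γ)) volume 0 b :=
    intervalIntegral.intervalIntegrable_rpow' (by linarith)
  exact (hpow.continuousOn_mul (g := fun r => M * Real.exp (κ * r)) (by fun_prop)).1

lemma intervalIntegrable_norm_indicator (hK : IsDuhamelKernel K) (a b : ℝ) :
    IntervalIntegrable (fun r => ‖(Ioi 0).indicator K r‖) volume a b := by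
  simp_rw [norm_indicator_eq_indicator_norm]
  rw [intervalIntegrable_iff, IntegrableOn, integrable_indicator_iff measurableSet_Ioi,
    IntegrableOn, Measure.restrict_restrict measurableSet_Ioi]
  exact (hK.integrableOn_norm (max a b)).mono_set fun r hr => ⟨hr.1, hr.2.2⟩

section Complete

variable [CompleteSpace W] (hK : IsDuhamelKernel K)
include hK

lemma integrableOn_apply {w : ℝ → W} {b : ℝ} (hw : ContinuousOn w (Icc 0 b)) :
    IntegrableOn (fun r => K r (w r)) (Ioc 0 b) := by
  obtain ⟨B, hB⟩ := isCompact_Icc.exists_bound_of_continuousOn hw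
  rw [integrableOn_Ioc_iff_integrableOn_Ioo]
  refine (((hK.integrableOn_norm b).mono_set Ioo_subset_Ioc_self).mul_const B).mono' ?_ ?_
  · exact (continuousOn_apply_of_forall_continuousOn isOpen_Ioo
      (fun v => (hK.continuousOn_apply v).mono Ioo_subset_Ioi_self)
      (hw.mono Ioo_subset_Icc_self)).aestronglyMeasurable measurableSet_Ioo
  · filter_upwards [ae_restrict_mem measurableSet_Ioo] with r hr
    exact (K r).le_opNorm_of_le (hB r (Ioo_subset_Icc_self hr))

lemma intervalIntegrable_apply_sub {φ : ℝ → W} (ht : t₀ ≤ t) (hφ : ContinuousOn φ (Icc t₀ t)) :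
    IntervalIntegrable (fun s => K (t - s) (φ s)) volume t₀ t := by
  have hcomp : ContinuousOn (fun r => φ (t - r)) (Icc 0 (t - t₀)) :=
    hφ.comp (by fun_prop) fun r hr => ⟨by linarith [hr.2], by linarith [hr.1]⟩
  have hint : IntervalIntegrable (fun r => K r (φ (t - r))) volume 0 (t - t₀) :=
    (intervalIntegrable_iff_integrableOn_Ioc_of_le (sub_nonneg.2 ht)).2
      (hK.integrableOn_apply hcomp)
  simpa using (hint.comp_sub_left t).symm

lemma aestronglyMeasurable_indicator_apply {w : ℝ → W} (hw : Continuous w) :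
    AEStronglyMeasurable (fun r => (Ioi 0).indicator K r (w r)) := by
  have heq : (fun r => (Ioi 0).indicator K r (w r)) = (Ioi 0).indicator fun r => K r (w r) := by
    ext r
    by_cases hr : 0 < r <;> simp [hr]
  rw [heq, aestronglyMeasurable_indicator_iff measurableSet_Ioi]
  exact (continuousOn_apply_of_forall_continuousOn isOpen_Ioi hK.continuousOn_apply
    hw.continuousOn).aestronglyMeasurable measurableSet_Ioi

lemma continuousOn_integral_of_continuous {ψ : ℝ → W} (hψ : Continuous ψ) {B : ℝ}
    (hB : ∀ s, ‖ψ s‖ ≤ B) :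
    ContinuousOn (fun t => ∫ s in t₀..t, K (t - s) (ψ s)) (Ici t₀) := by
  -- Extending `K` by zero makes the endpoint `0` interior to the domain of the integrand.
  let H : ℝ → ℝ → Y := fun t r => (Ioi 0).indicator K r (ψ (t - r))
  have hH {t : ℝ} (ht : t ∈ Ici t₀) :
      ∫ s in t₀..t, K (t - s) (ψ s) = ∫ r in (0 : ℝ)..(t - t₀), H t r := by
    have hsub := intervalIntegral.integral_comp_sub_left (a := t₀) (b := t)
      (fun r => K r (ψ (t - r))) t
    simp only [sub_sub_cancel, sub_self] at hsub
    rw [hsub]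
    refine intervalIntegral.integral_congr_ae (ae_of_all _ fun r hr => ?_)
    rw [uIoc_of_le (sub_nonneg.2 ht)] at hr
    simp only [H, indicator_of_mem (mem_Ioi.2 hr.1)]
  intro t ht
  have hprim : ContinuousAt (fun p : ℝ × ℝ => ∫ r in (0 : ℝ)..p.2, H p.1 r) (t, t - t₀) :=
    intervalIntegral.continuousAt_parametric_primitive_of_dominated
      (fun r => ‖(Ioi 0).indicator K r‖ * B) (-1) (t - t₀ + 1)
      (fun u => (hK.aestronglyMeasurable_indicator_apply (by fun_prop)).restrict)
      (Eventually.of_forall fun u => ae_of_all _ fun r =>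
        ContinuousLinearMap.le_opNorm_of_le _ (hB _))
      ((hK.intervalIntegrable_norm_indicator _ _).mul_const B)
      (ae_of_all _ fun r => by fun_prop) ⟨by norm_num, by linarith [mem_Ici.1 ht]⟩
      ⟨by linarith [mem_Ici.1 ht], by linarith⟩ (measure_singleton _)
  have hcomp : ContinuousAt (fun u => ∫ r in (0 : ℝ)..(u - t₀), H u r) t :=
    hprim.comp (f := fun u : ℝ => (u, u - t₀)) (by fun_prop)
  exact hcomp.continuousWithinAt.congr (fun _ => hH) (hH ht)

lemma continuousOn_integral {φ : ℝ → W} (hφ : ContinuousOn φ (Icc t₀ (t₀ + T))) :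
    ContinuousOn (fun t => ∫ s in t₀..t, K (t - s) (φ s)) (Icc t₀ (t₀ + T)) := by
  rcases lt_or_ge (t₀ + T) t₀ with hT | hT
  · simp [Icc_eq_empty_of_lt hT]
  obtain ⟨B, hB⟩ := isCompact_Icc.exists_bound_of_continuousOn hφ
  have hψ : Continuous (IccExtend hT ((Icc t₀ (t₀ + T)).domRestrict φ)) :=
    (continuousOn_iff_continuous_domRestrict.1 hφ).Icc_extend'
  refine ((hK.continuousOn_integral_of_continuous hψ fun s =>
    hB _ (projIcc t₀ (t₀ + T) hT s).2).mono Icc_subset_Ici_self).congr fun t ht => ?_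
  refine intervalIntegral.integral_congr fun s hs => ?_
  rw [uIcc_of_le ht.1] at hs
  simp [IccExtend_of_mem hT _ (Icc_subset_Icc_right ht.2 hs)]

end Complete

lemma norm_integral_le (hK : IsDuhamelKernel K) {φ : ℝ → W} {B : ℝ} (ht : t ∈ Icc t₀ (t₀ + T))
    (hφ : ∀ s ∈ Icc t₀ t, ‖φ s‖ ≤ B) :
    ‖∫ s in t₀..t, K (t - s) (φ s)‖ ≤ (∫ r in Ioc 0 T, ‖K r‖) * B := by
  have hB : 0 ≤ B := (norm_nonneg _).trans (hφ t₀ (left_mem_Icc.2 ht.1))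
  have hle : t - t₀ ≤ T := by linarith [ht.2]
  have hint : IntervalIntegrable (fun r => ‖K r‖ * B) volume 0 (t - t₀) :=
    (intervalIntegrable_iff_integrableOn_Ioc_of_le (sub_nonneg.2 ht.1)).2
      ((hK.integrableOn_norm _).mul_const B)
  calc ‖∫ s in t₀..t, K (t - s) (φ s)‖
      ≤ ∫ s in t₀..t, ‖K (t - s)‖ * B := by
        refine intervalIntegral.norm_integral_le_of_norm_le ht.1 (ae_of_all _ fun s hs => ?_) ?_
        · exact (K (t - s)).le_opNorm_of_le (hφ s (Ioc_subset_Icc_self hs))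
        · simpa using (hint.comp_sub_left t).symm
    _ = (∫ r in Ioc 0 (t - t₀), ‖K r‖) * B := by
        rw [intervalIntegral.integral_comp_sub_left (fun r => ‖K r‖ * B), sub_self,
          intervalIntegral.integral_of_le (sub_nonneg.2 ht.1), integral_mul_const]
    _ ≤ (∫ r in Ioc 0 T, ‖K r‖) * B := by
        refine mul_le_mul_of_nonneg_right ?_ hB
        exact setIntegral_mono_set (hK.integrableOn_norm T) (ae_of_all _ fun r => norm_nonneg _)
          (Ioc_subset_Ioc_right hle).eventuallyLE

end IsDuhamelKernel

/-- `z` solves the Duhamel equation `z(t) = p(t) + ∫_{t₀}^t K (t - s) (φ s) ds` on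
`[t₀, t₀ + T]`. A nonlinear equation is the case `φ = fun s => F s (z s)`: keeping the forcing `φ`
as a separate argument makes the relation linear in `(p, φ, z)`. -/
def IsDuhamelSolution (K : ℝ → W →L[ℝ] Y) (t₀ T : ℝ) (p : ℝ → Y) (φ : ℝ → W) (z : ℝ → Y) :
    Prop :=
  ContinuousOn z (Icc t₀ (t₀ + T)) ∧
    (∀ t ∈ Icc t₀ (t₀ + T), IntervalIntegrable (fun s => K (t - s) (φ s)) volume t₀ t) ∧
    ∀ t ∈ Icc t₀ (t₀ + T), z t = p t + ∫ s in t₀..t, K (t - s) (φ s)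

/-- Exponential damping `g ↦ exp (-μ (t - t₀)) g` started at `t₀`. It carries Duhamel equations to
Duhamel equations, with the kernel damped from time `0`, and turns the norm
`sup exp (-μ (t - t₀)) ‖z t‖` into the usual supremum norm. -/
noncomputable def expDamped {E : Type*} [NormedAddCommGroup E] [NormedSpace ℝ E] (μ t₀ : ℝ)
    (g : ℝ → E) (t : ℝ) : E :=
  Real.exp (-(μ * (t - t₀))) • g t

/-- A damping rate `μ` for which an `L`-Lipschitz nonlinearity makes the damped Duhamel operator on
an interval of length `T` a `1/2`-contraction. The factor `L + 1` in place of `L` also makes the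
damped kernel itself have mass at most `1/2`. -/
def IsContractionRate (K : ℝ → W →L[ℝ] Y) (T : ℝ) (L : ℝ≥0) (μ : ℝ) : Prop :=
  0 ≤ μ ∧ (∫ r in Ioc 0 T, ‖expDamped μ 0 K r‖) * (L + 1) ≤ 1 / 2

section ExpDamped

variable {E : Type*} [NormedAddCommGroup E] [NormedSpace ℝ E] {μ t₀ t T : ℝ} {g : ℝ → E}

lemma expDamped_neg : expDamped (-μ) t₀ g t = (Real.exp (-(μ * (t - t₀))))⁻¹ • g t := by
  simp [expDamped, Real.exp_neg]

@[simp]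
lemma expDamped_neg_expDamped : expDamped (-μ) t₀ (expDamped μ t₀ g) = g := by
  ext t
  simp [expDamped, smul_smul, ← Real.exp_add]

@[simp]
lemma expDamped_expDamped_neg : expDamped μ t₀ (expDamped (-μ) t₀ g) = g := by
  simpa using expDamped_neg_expDamped (μ := -μ) (t₀ := t₀) (g := g)

lemma norm_expDamped : ‖expDamped μ t₀ g t‖ = Real.exp (-(μ * (t - t₀))) * ‖g t‖ := by
  simp [expDamped, norm_smul]

lemma norm_expDamped_le (hμ : 0 ≤ μ) (ht : t₀ ≤ t) : ‖expDamped μ t₀ g t‖ ≤ ‖g t‖ := by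
  rw [norm_expDamped]
  exact mul_le_of_le_one_left (norm_nonneg _)
    (Real.exp_le_one_iff.2 (neg_nonpos.2 (mul_nonneg hμ (sub_nonneg.2 ht))))

lemma norm_le_exp_mul_norm_expDamped (hμ : 0 ≤ μ) (ht : t ≤ t₀ + T) :
    ‖g t‖ ≤ Real.exp (μ * T) * ‖expDamped μ t₀ g t‖ := by
  rw [norm_expDamped, ← mul_assoc, ← Real.exp_add]
  refine le_mul_of_one_le_left (norm_nonneg _) (Real.one_le_exp ?_)
  nlinarith

lemma continuousOn_expDamped {s : Set ℝ} (hg : ContinuousOn g s) :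
    ContinuousOn (expDamped μ t₀ g) s :=
  ContinuousOn.smul (by fun_prop) hg

lemma expDamped_sub_apply_expDamped (K : ℝ → W →L[ℝ] Y) (φ : ℝ → W) (s : ℝ) :
    expDamped μ 0 K (t - s) (expDamped μ t₀ φ s) =
      Real.exp (-(μ * (t - t₀))) • K (t - s) (φ s) := by
  have hexp : -(μ * (t - t₀)) = -(μ * (t - s)) + -(μ * (s - t₀)) := by ring
  simp [expDamped, smul_smul, hexp, Real.exp_add, mul_comm]

end ExpDamped

variable {K : ℝ → W →L[ℝ] Y} {t₀ T μ : ℝ} {L : ℝ≥0} {p q z w : ℝ → Y} {φ ψ : ℝ → W}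

lemma IsDuhamelKernel.damp (hK : IsDuhamelKernel K) (hμ : 0 ≤ μ) :
    IsDuhamelKernel (expDamped μ 0 K) :=
  of_norm_le (fun v => continuousOn_expDamped (hK.continuousOn_apply v)) hK.integrableOn_norm
    fun _ hr => norm_expDamped_le hμ hr.le

lemma tendsto_setIntegral_norm_expDamped {E : Type*} [NormedAddCommGroup E] [NormedSpace ℝ E]
    {g : ℝ → E} (hg : IntegrableOn (fun r => ‖g r‖) (Ioc 0 T)) :
    Tendsto (fun μ => ∫ r in Ioc 0 T, ‖expDamped μ 0 g r‖) atTop (𝓝 0) := by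
  suffices h : Tendsto (fun μ => ∫ r in Ioc 0 T, ‖expDamped μ 0 g r‖) atTop
      (𝓝 (∫ _ in Ioc 0 T, (0 : ℝ))) by simpa using h
  refine tendsto_integral_filter_of_dominated_convergence (fun r => ‖g r‖) ?_ ?_ hg ?_
  · simp_rw [norm_expDamped]
    exact Eventually.of_forall fun μ => AEStronglyMeasurable.mul (by fun_prop) hg.1
  · filter_upwards [eventually_ge_atTop 0] with μ hμ
    filter_upwards [ae_restrict_mem measurableSet_Ioc] with r hr
    simpa using norm_expDamped_le hμ hr.1.le
  · filter_upwards [ae_restrict_mem measurableSet_Ioc] with r hr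
    have hexp : Tendsto (fun μ : ℝ => Real.exp (-(μ * r))) atTop (𝓝 0) :=
      Real.tendsto_exp_neg_atTop_nhds_zero.comp (tendsto_id.atTop_mul_const hr.1)
    simpa [norm_expDamped] using hexp.mul_const ‖g r‖

lemma IsDuhamelKernel.exists_isContractionRate (hK : IsDuhamelKernel K) (T : ℝ) (L : ℝ≥0) :
    ∃ μ, IsContractionRate K T L μ := by
  have hlim := (tendsto_setIntegral_norm_expDamped (hK.integrableOn_norm T)).mul_const (L + 1 : ℝ)
  rw [zero_mul] at hlim
  exact ((eventually_ge_atTop 0).and (hlim.eventually_le_const one_half_pos)).exists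

namespace IsDuhamelSolution

lemma congr (hz : IsDuhamelSolution K t₀ T p φ z) (hφ : EqOn φ ψ (Icc t₀ (t₀ + T)))
    (hzw : EqOn z w (Icc t₀ (t₀ + T))) : IsDuhamelSolution K t₀ T p ψ w := by
  have hKφ {t : ℝ} (ht : t ∈ Icc t₀ (t₀ + T)) :
      EqOn (fun s => K (t - s) (φ s)) (fun s => K (t - s) (ψ s)) (uIcc t₀ t) := fun s hs => by
    rw [uIcc_of_le ht.1] at hs
    simp only [hφ (Icc_subset_Icc_right ht.2 hs)]
  refine ⟨hz.1.congr hzw.symm, fun t ht => (hz.2.1 t ht).congr ((hKφ ht).mono uIoc_subset_uIcc),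
    fun t ht => ?_⟩
  rw [← hzw ht, hz.2.2 t ht, intervalIntegral.integral_congr (hKφ ht)]

lemma add (hz : IsDuhamelSolution K t₀ T p φ z) (hw : IsDuhamelSolution K t₀ T q ψ w) :
    IsDuhamelSolution K t₀ T (fun t => p t + q t) (fun t => φ t + ψ t) fun t => z t + w t := by
  simp only [IsDuhamelSolution, map_add]
  refine ⟨hz.1.add hw.1, fun t ht => (hz.2.1 t ht).add (hw.2.1 t ht), fun t ht => ?_⟩
  rw [intervalIntegral.integral_add (hz.2.1 t ht) (hw.2.1 t ht), hz.2.2 t ht, hw.2.2 t ht,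
    add_add_add_comm]

lemma const_smul (hz : IsDuhamelSolution K t₀ T p φ z) (c : ℝ) :
    IsDuhamelSolution K t₀ T (fun t => c • p t) (fun t => c • φ t) fun t => c • z t := by
  simp only [IsDuhamelSolution, map_smul]
  refine ⟨hz.1.const_smul c, fun t ht => (hz.2.1 t ht).smul c, fun t ht => ?_⟩
  rw [intervalIntegral.integral_smul, hz.2.2 t ht, smul_add]

lemma sub (hz : IsDuhamelSolution K t₀ T p φ z) (hw : IsDuhamelSolution K t₀ T q ψ w) :
    IsDuhamelSolution K t₀ T (fun t => p t - q t) (fun t => φ t - ψ t) fun t => z t - w t := by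
  simpa [sub_eq_add_neg] using hz.add (hw.const_smul (-1))

lemma damp (hz : IsDuhamelSolution K t₀ T p φ z) (μ : ℝ) :
    IsDuhamelSolution (expDamped μ 0 K) t₀ T (expDamped μ t₀ p) (expDamped μ t₀ φ)
      (expDamped μ t₀ z) := by
  simp only [IsDuhamelSolution, expDamped_sub_apply_expDamped]
  refine ⟨continuousOn_expDamped hz.1, fun t ht => (hz.2.1 t ht).smul _, fun t ht => ?_⟩
  rw [intervalIntegral.integral_smul, expDamped, hz.2.2 t ht, smul_add, expDamped]

lemma norm_le_of_setIntegral_norm_le {a b : ℝ} (hK : IsDuhamelKernel K)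
    (hKL : (∫ r in Ioc 0 T, ‖K r‖) * (L + 1) ≤ 1 / 2) (hb : 0 ≤ b)
    (hz : IsDuhamelSolution K t₀ T p φ z) (hp : ∀ t ∈ Icc t₀ (t₀ + T), ‖p t‖ ≤ a)
    (hφ : ∀ t ∈ Icc t₀ (t₀ + T), ‖φ t‖ ≤ L * ‖z t‖ + b) {t : ℝ} (ht : t ∈ Icc t₀ (t₀ + T)) :
    ‖z t‖ ≤ 2 * (a + b) := by
  -- At a maximum point of `‖z‖` the `1/2`-contraction absorbs the linear term.
  obtain ⟨τ, hτ, hmax⟩ := isCompact_Icc.exists_isMaxOn ⟨t, ht⟩ hz.1.norm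
  have hφτ : ∀ s ∈ Icc t₀ τ, ‖φ s‖ ≤ (L + 1) * (‖z τ‖ + b) := fun s hs => by
    have hs' := Icc_subset_Icc_right hτ.2 hs
    have hzs : ‖z s‖ ≤ ‖z τ‖ := hmax hs'
    nlinarith [hφ s hs', mul_le_mul_of_nonneg_left hzs L.2, norm_nonneg (z τ),
      mul_nonneg L.2 hb]
  have hzτ : ‖z τ‖ ≤ a + 1 / 2 * (‖z τ‖ + b) := calc
    ‖z τ‖ ≤ ‖p τ‖ + ‖∫ s in t₀..τ, K (τ - s) (φ s)‖ := by
      rw [hz.2.2 τ hτ]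
      exact norm_add_le _ _
    _ ≤ a + (∫ r in Ioc 0 T, ‖K r‖) * ((L + 1) * (‖z τ‖ + b)) :=
      add_le_add (hp τ hτ) (hK.norm_integral_le hτ hφτ)
    _ ≤ a + 1 / 2 * (‖z τ‖ + b) := by
      rw [← mul_assoc]
      gcongr
  linarith [show ‖z t‖ ≤ ‖z τ‖ from hmax ht]

lemma norm_le {a b : ℝ} (hz : IsDuhamelSolution K t₀ T p φ z) (hK : IsDuhamelKernel K)
    (hμ : IsContractionRate K T L μ) (hb : 0 ≤ b) (hp : ∀ t ∈ Icc t₀ (t₀ + T), ‖p t‖ ≤ a)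
    (hφ : ∀ t ∈ Icc t₀ (t₀ + T), ‖φ t‖ ≤ L * ‖z t‖ + b) {t : ℝ} (ht : t ∈ Icc t₀ (t₀ + T)) :
    ‖z t‖ ≤ 2 * Real.exp (μ * T) * (a + b) := by
  have hdamped : ‖expDamped μ t₀ z t‖ ≤ 2 * (a + b) := by
    refine (hz.damp μ).norm_le_of_setIntegral_norm_le (hK.damp hμ.1) hμ.2 hb
      (fun s hs => (norm_expDamped_le hμ.1 hs.1).trans (hp s hs)) (fun s hs => ?_) ht
    have hexp : Real.exp (-(μ * (s - t₀))) ≤ 1 :=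
      Real.exp_le_one_iff.2 (neg_nonpos.2 (mul_nonneg hμ.1 (sub_nonneg.2 hs.1)))
    rw [norm_expDamped, norm_expDamped]
    nlinarith [mul_le_mul_of_nonneg_left (hφ s hs) (Real.exp_pos (-(μ * (s - t₀)))).le,
      mul_le_mul_of_nonneg_right hexp hb]
  calc ‖z t‖ ≤ Real.exp (μ * T) * ‖expDamped μ t₀ z t‖ :=
        norm_le_exp_mul_norm_expDamped hμ.1 ht.2
    _ ≤ Real.exp (μ * T) * (2 * (a + b)) := by gcongr
    _ = 2 * Real.exp (μ * T) * (a + b) := by ring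

lemma norm_sub_le {b : ℝ} (hz : IsDuhamelSolution K t₀ T p φ z)
    (hw : IsDuhamelSolution K t₀ T p ψ w) (hK : IsDuhamelKernel K)
    (hμ : IsContractionRate K T L μ) (hb : 0 ≤ b)
    (hφψ : ∀ t ∈ Icc t₀ (t₀ + T), ‖φ t - ψ t‖ ≤ L * ‖z t - w t‖ + b) {t : ℝ}
    (ht : t ∈ Icc t₀ (t₀ + T)) : ‖z t - w t‖ ≤ 2 * Real.exp (μ * T) * b := by
  simpa using (hz.sub hw).norm_le hK hμ hb (a := 0) (by simp) hφψ ht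

lemma eqOn (hz : IsDuhamelSolution K t₀ T p φ z) (hw : IsDuhamelSolution K t₀ T p ψ w)
    (hK : IsDuhamelKernel K) (hμ : IsContractionRate K T L μ)
    (hφψ : ∀ t ∈ Icc t₀ (t₀ + T), ‖φ t - ψ t‖ ≤ L * ‖z t - w t‖) : EqOn z w (Icc t₀ (t₀ + T)) :=
  fun t ht => sub_eq_zero.1 <| norm_le_zero_iff.1 <| by
    simpa using hz.norm_sub_le hw hK hμ le_rfl (by simpa using hφψ) ht

end IsDuhamelSolution

section Existence

variable [CompleteSpace W]

/-- The Duhamel operator `φ ↦ ∫_{t₀}^t K (t - s) (φ s) ds` on continuous functions. -/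
noncomputable def IsDuhamelKernel.duhamelMap (hK : IsDuhamelKernel K) (hT : t₀ ≤ t₀ + T)
    (φ : C(Icc t₀ (t₀ + T), W)) : C(Icc t₀ (t₀ + T), Y) :=
  ⟨(Icc t₀ (t₀ + T)).domRestrict fun t => ∫ s in t₀..t, K (t - s) (IccExtend hT φ s),
    continuousOn_iff_continuous_domRestrict.1
      (hK.continuousOn_integral φ.continuous.Icc_extend'.continuousOn)⟩

@[simp]
lemma IsDuhamelKernel.duhamelMap_zero (hK : IsDuhamelKernel K) (hT : t₀ ≤ t₀ + T) :
    hK.duhamelMap hT 0 = 0 := by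
  ext t
  simp [duhamelMap, IccExtend]

lemma IsDuhamelKernel.lipschitzWith_duhamelMap (hK : IsDuhamelKernel K) (hT : t₀ ≤ t₀ + T)
    {c : ℝ≥0} (hc : ∫ r in Ioc 0 T, ‖K r‖ ≤ c) : LipschitzWith c (hK.duhamelMap hT) := by
  refine LipschitzWith.of_dist_le_mul fun φ ψ => (ContinuousMap.dist_le (by positivity)).2 ?_
  rintro ⟨t, ht⟩
  have hint (χ : C(Icc t₀ (t₀ + T), W)) :
      IntervalIntegrable (fun s => K (t - s) (IccExtend hT χ s)) volume t₀ t :=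
    hK.intervalIntegrable_apply_sub ht.1 χ.continuous.Icc_extend'.continuousOn
  calc dist (hK.duhamelMap hT φ ⟨t, ht⟩) (hK.duhamelMap hT ψ ⟨t, ht⟩)
      = ‖∫ s in t₀..t, K (t - s) (IccExtend hT φ s - IccExtend hT ψ s)‖ := by
        simp [duhamelMap, dist_eq_norm, ← intervalIntegral.integral_sub (hint φ) (hint ψ)]
    _ ≤ (∫ r in Ioc 0 T, ‖K r‖) * dist φ ψ := by
        refine hK.norm_integral_le ht fun s _ => ?_
        rw [← dist_eq_norm]
        exact ContinuousMap.dist_apply_le_dist _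
    _ ≤ c * dist φ ψ := by gcongr

lemma isDuhamelSolution_IccExtend {z : C(Icc t₀ (t₀ + T), Y)} {φ : C(Icc t₀ (t₀ + T), W)}
    (hK : IsDuhamelKernel K) (hT : t₀ ≤ t₀ + T) (hz : ∀ t, z t = p t + hK.duhamelMap hT φ t) :
    IsDuhamelSolution K t₀ T p (IccExtend hT φ) (IccExtend hT z) := by
  refine ⟨z.continuous.Icc_extend'.continuousOn, fun t ht =>
    hK.intervalIntegrable_apply_sub ht.1 φ.continuous.Icc_extend'.continuousOn, fun t ht => ?_⟩
  rw [IccExtend_of_mem hT z ht, hz]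
  rfl

variable [CompleteSpace Y] {F : ℝ → Y → W} {a : ℝ}

lemma exists_isDuhamelSolution_of_setIntegral_norm_le (hK : IsDuhamelKernel K) (hT : 0 ≤ T)
    (hKL : (∫ r in Ioc 0 T, ‖K r‖) * (L + 1) ≤ 1 / 2)
    (hF : ContinuousOn (uncurry F) (Icc t₀ (t₀ + T) ×ˢ univ))
    (hF0 : ∀ s ∈ Icc t₀ (t₀ + T), F s 0 = 0)
    (hFL : ∀ s ∈ Icc t₀ (t₀ + T), LipschitzOnWith L (F s) (closedBall 0 (2 * a)))
    (hpc : ContinuousOn p (Icc t₀ (t₀ + T))) (hp : ∀ t ∈ Icc t₀ (t₀ + T), ‖p t‖ ≤ a) :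
    ∃ z, IsDuhamelSolution K t₀ T p (fun s => F s (z s)) z ∧
      ∀ t ∈ Icc t₀ (t₀ + T), ‖z t‖ ≤ 2 * a := by
  have hle : t₀ ≤ t₀ + T := le_add_of_nonneg_right hT
  have ha : 0 ≤ a := (norm_nonneg _).trans (hp t₀ (left_mem_Icc.2 hle))
  lift ∫ r in Ioc 0 T, ‖K r‖ to ℝ≥0 using integral_nonneg fun _ => norm_nonneg _ with c hc
  have hcL : (c * L : ℝ≥0) ≤ (1 / 2 : ℝ) := by
    push_cast
    nlinarith [c.2]
  let P : C(Icc t₀ (t₀ + T), Y) := ⟨_, continuousOn_iff_continuous_domRestrict.1 hpc⟩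
  let G : C(Icc t₀ (t₀ + T) × Y, W) := ⟨fun q => F q.1 q.2,
    hF.comp_continuous (f := fun q : Icc t₀ (t₀ + T) × Y => ((q.1 : ℝ), q.2)) (by fun_prop)
      fun q => ⟨q.1.2, mem_univ _⟩⟩
  let N (u : C(Icc t₀ (t₀ + T), Y)) : C(Icc t₀ (t₀ + T), W) :=
    G.comp ((ContinuousMap.id _).prodMk u)
  have hN : LipschitzOnWith L N (closedBall 0 (2 * a)) :=
    lipschitzOnWith_comp_id_prodMk (c := 0) fun s => hFL s s.2
  have hN0 : N 0 = 0 := by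
    ext s
    exact hF0 s s.2
  have hΦ : LipschitzOnWith (c * L) (fun u => P + hK.duhamelMap hle (N u)) (closedBall 0 (2 * a)) :=
    LipschitzOnWith.of_dist_le_mul fun u hu v hv => by
      simpa using ((hK.lipschitzWith_duhamelMap hle hc.ge).comp_lipschitzOnWith hN).dist_le_mul
        u hu v hv
  have hΦ0 : dist (P + hK.duhamelMap hle (N 0)) 0 ≤ (1 - (c * L : ℝ≥0)) * (2 * a) := by
    rw [hN0, hK.duhamelMap_zero, add_zero, dist_zero_right]
    exact ((ContinuousMap.norm_le P ha).2 fun t => hp t t.2).trans (by nlinarith)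
  obtain ⟨u, hu, hfix⟩ := exists_isFixedPt_mem_closedBall hΦ
    (by rw [← NNReal.coe_lt_coe, NNReal.coe_one]; linarith) hΦ0
  have hsol := isDuhamelSolution_IccExtend (p := p) hK hle fun t => (DFunLike.congr_fun hfix t).symm
  refine ⟨IccExtend hle u, hsol.congr (fun t ht => ?_) (eqOn_refl _ _), fun t ht => ?_⟩
  · simp only [IccExtend_of_mem hle _ ht]
    rfl
  · rw [IccExtend_of_mem hle _ ht]
    exact (u.norm_coe_le_norm _).trans (mem_closedBall_zero_iff.1 hu)

lemma exists_isDuhamelSolution (hK : IsDuhamelKernel K) (hT : 0 ≤ T)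
    (hμ : IsContractionRate K T L μ) (hF : ContinuousOn (uncurry F) (Icc t₀ (t₀ + T) ×ˢ univ))
    (hF0 : ∀ s ∈ Icc t₀ (t₀ + T), F s 0 = 0)
    (hFL : ∀ s ∈ Icc t₀ (t₀ + T), LipschitzOnWith L (F s) (closedBall 0 (2 * Real.exp (μ * T) * a)))
    (hpc : ContinuousOn p (Icc t₀ (t₀ + T))) (hp : ∀ t ∈ Icc t₀ (t₀ + T), ‖p t‖ ≤ a) :
    ∃ z, IsDuhamelSolution K t₀ T p (fun s => F s (z s)) z ∧
      ∀ t ∈ Icc t₀ (t₀ + T), ‖z t‖ ≤ 2 * Real.exp (μ * T) * a := by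
  let G (s : ℝ) (y : Y) : W :=
    Real.exp (-(μ * (s - t₀))) • F s ((Real.exp (-(μ * (s - t₀))))⁻¹ • y)
  have hG : ContinuousOn (uncurry G) (Icc t₀ (t₀ + T) ×ˢ univ) := by
    refine ContinuousOn.smul (by fun_prop) (hF.comp (f := fun q : ℝ × Y =>
      (q.1, (Real.exp (-(μ * (q.1 - t₀))))⁻¹ • q.2)) ?_ fun q hq => ⟨hq.1, mem_univ _⟩)
    simp_rw [← Real.exp_neg]
    fun_prop
  have hG0 (s) (hs : s ∈ Icc t₀ (t₀ + T)) : G s 0 = 0 := by simp [G, hF0 s hs]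
  have hGL (s) (hs : s ∈ Icc t₀ (t₀ + T)) : LipschitzOnWith L (G s) (closedBall 0 (2 * a)) := by
    refine lipschitzOnWith_smul_comp_inv_smul (Real.exp_pos _)
      ((hFL s hs).mono (closedBall_subset_closedBall ?_))
    calc (Real.exp (-(μ * (s - t₀))))⁻¹ * (2 * a) ≤ Real.exp (μ * T) * (2 * a) := by
          rw [← Real.exp_neg, neg_neg]
          gcongr
          exacts [mul_nonneg two_pos.le ((norm_nonneg _).trans (hp s hs)), hμ.1, by linarith [hs.2]]
      _ = 2 * Real.exp (μ * T) * a := by ring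
  obtain ⟨u, hu, hua⟩ := exists_isDuhamelSolution_of_setIntegral_norm_le (hK.damp hμ.1) hT hμ.2
    hG hG0 hGL (continuousOn_expDamped hpc)
    fun t ht => (norm_expDamped_le hμ.1 ht.1).trans (hp t ht)
  have hGu : expDamped (-μ) t₀ (fun s => G s (u s)) = fun s => F s (expDamped (-μ) t₀ u s) := by
    ext s
    simp [expDamped_neg, G]
  refine ⟨expDamped (-μ) t₀ u, by simpa [hGu] using hu.damp (-μ), fun t ht => ?_⟩
  calc ‖expDamped (-μ) t₀ u t‖
      ≤ Real.exp (μ * T) * ‖expDamped μ t₀ (expDamped (-μ) t₀ u) t‖ :=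
        norm_le_exp_mul_norm_expDamped hμ.1 ht.2
    _ ≤ Real.exp (μ * T) * (2 * a) := by
        rw [expDamped_expDamped_neg]
        exact mul_le_mul_of_nonneg_left (hua t ht) (Real.exp_pos _).le
    _ = 2 * Real.exp (μ * T) * a := by ring

end Existence

section Propagator

variable [CompleteSpace W] [CompleteSpace Y] {H : Type*} [NormedAddCommGroup H] [NormedSpace ℝ H]
  {B : ℝ → Y →L[ℝ] W} {P : ℝ → H →L[ℝ] Y} {M : ℝ}

lemma exists_propagator (hK : IsDuhamelKernel K) (hT : 0 ≤ T) (hμ : IsContractionRate K T L μ)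
    (hBc : ContinuousOn B (Icc t₀ (t₀ + T))) (hB : ∀ t ∈ Icc t₀ (t₀ + T), ‖B t‖ ≤ L)
    (hPc : ∀ h, ContinuousOn (fun t => P t h) (Icc t₀ (t₀ + T)))
    (hP : ∀ t ∈ Icc t₀ (t₀ + T), ‖P t‖ ≤ M) :
    ∃ V : ℝ → H →L[ℝ] Y,
      (∀ h, IsDuhamelSolution K t₀ T (fun t => P t h) (fun s => B s (V s h)) fun t => V t h) ∧
      ∀ t ∈ Icc t₀ (t₀ + T), ‖V t‖ ≤ 2 * Real.exp (μ * T) * M := by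
  have hle : t₀ ≤ t₀ + T := le_add_of_nonneg_right hT
  have hM : 0 ≤ M := (norm_nonneg _).trans (hP t₀ (left_mem_Icc.2 hle))
  have hsol (h : H) : ∃ z, IsDuhamelSolution K t₀ T (fun t => P t h) (fun s => B s (z s)) z ∧
      ∀ t ∈ Icc t₀ (t₀ + T), ‖z t‖ ≤ 2 * Real.exp (μ * T) * (M * ‖h‖) :=
    exists_isDuhamelSolution (F := fun s y => B s y) hK hT hμ
      ((hBc.comp continuousOn_fst fun q hq => hq.1).clm_apply continuousOn_snd)
      (fun s _ => map_zero _) (fun s hs => ((B s).lipschitz.weaken (hB s hs)).lipschitzOnWith)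
      (hPc h) fun t ht => (P t).le_of_opNorm_le (hP t ht) h
  choose v hv hvM using hsol
  have huniq {h : H} {z : ℝ → Y}
      (hz : IsDuhamelSolution K t₀ T (fun t => P t h) (fun s => B s (z s)) z) :
      EqOn (v h) z (Icc t₀ (t₀ + T)) :=
    (hv h).eqOn hz hK hμ fun t ht => by
      simpa using (B t).le_of_opNorm_le (hB t ht) (v h t - z t)
  have hadd (h k : H) : EqOn (v (h + k)) (fun t => v h t + v k t) (Icc t₀ (t₀ + T)) :=
    huniq (by simpa using (hv h).add (hv k))
  have hsmul (c : ℝ) (h : H) : EqOn (v (c • h)) (fun t => c • v h t) (Icc t₀ (t₀ + T)) :=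
    huniq (by simpa using (hv h).const_smul c)
  let V (t : ℝ) : H →L[ℝ] Y := LinearMap.mkContinuous
    { toFun := fun h => v h (projIcc t₀ (t₀ + T) hle t)
      map_add' := fun h k => hadd h k (projIcc _ _ hle t).2
      map_smul' := fun c h => hsmul c h (projIcc _ _ hle t).2 }
    (2 * Real.exp (μ * T) * M) fun h => by
      simpa [mul_assoc] using hvM h _ (projIcc t₀ (t₀ + T) hle t).2
  have hV (h : H) : EqOn (v h) (fun t => V t h) (Icc t₀ (t₀ + T)) := fun t ht => by
    simp [V, projIcc_of_mem hle ht]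
  refine ⟨V, fun h => (hv h).congr (fun t ht => congrArg (B t) (hV h ht)) (hV h), fun t _ => ?_⟩
  exact LinearMap.mkContinuous_norm_le _ (by positivity) _

end Propagator

lemma isMildSolution_iff_isDuhamelSolution {S : ℝ → Y →L[ℝ] Y} {f : ℝ → Y → W} {x₀ : Y}
    {x : ℝ → Y} (hT : 0 ≤ T) (hS0 : S 0 = ContinuousLinearMap.id ℝ Y) :
    IsMildSolution S K f t₀ T x₀ x ↔
      IsDuhamelSolution K t₀ T (fun t => S (t - t₀) x₀) (fun s => f s (x s)) x :=
  ⟨fun h => ⟨h.1, h.2.2⟩, fun h =>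
    ⟨h.1, by simpa [hS0] using h.2.2 t₀ (left_mem_Icc.2 (le_add_of_nonneg_right hT)), h.2⟩⟩

section Perturbation

variable {f : ℝ → Y → W} {x : ℝ → Y} {v : ℝ → Y} {B : ℝ → Y →L[ℝ] W}

lemma exists_isDuhamelSolution_increment [CompleteSpace Y] [CompleteSpace W] {a : ℝ}
    (hx : ContinuousOn x (Icc t₀ (t₀ + T))) (hK : IsDuhamelKernel K) (hT : 0 ≤ T)
    (hμ : IsContractionRate K T L μ) (hf : Continuous (uncurry f))
    (hfL : ∀ s ∈ Icc t₀ (t₀ + T),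
      LipschitzOnWith L (f s) (closedBall (x s) (2 * Real.exp (μ * T) * a)))
    (hqc : ContinuousOn q (Icc t₀ (t₀ + T))) (hq : ∀ t ∈ Icc t₀ (t₀ + T), ‖q t‖ ≤ a) :
    ∃ z, IsDuhamelSolution K t₀ T q (fun s => f s (x s + z s) - f s (x s)) z ∧
      ∀ t ∈ Icc t₀ (t₀ + T), ‖z t‖ ≤ 2 * Real.exp (μ * T) * a := by
  have hxc : ContinuousOn (fun r : ℝ × Y => x r.1) (Icc t₀ (t₀ + T) ×ˢ univ) :=
    hx.comp continuousOn_fst fun r hr => hr.1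
  refine exists_isDuhamelSolution (F := fun s y => f s (x s + y) - f s (x s)) hK hT hμ ?_
    (fun s _ => by simp) (fun s hs => LipschitzOnWith.of_dist_le_mul fun y hy y' hy' => ?_) hqc hq
  · exact (hf.comp_continuousOn (continuousOn_fst.prodMk (hxc.add continuousOn_snd))).sub
      (hf.comp_continuousOn (continuousOn_fst.prodMk hxc))
  · rw [dist_sub_right, ← dist_add_left (x s) y y']
    exact (hfL s hs).dist_le_mul _ (by simpa using hy) _ (by simpa using hy')

lemma IsDuhamelSolution.norm_sub_linearization_le {b : ℝ} (hz : IsDuhamelSolution K t₀ T q φ z)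
    (hv : IsDuhamelSolution K t₀ T q (fun s => B s (v s)) v) (hK : IsDuhamelKernel K)
    (hμ : IsContractionRate K T L μ) (hB : ∀ s ∈ Icc t₀ (t₀ + T), ‖B s‖ ≤ L)
    (hφ : ∀ s ∈ Icc t₀ (t₀ + T), ‖φ s - B s (z s)‖ ≤ b) {t : ℝ} (ht : t ∈ Icc t₀ (t₀ + T)) :
    ‖z t - v t‖ ≤ 2 * Real.exp (μ * T) * b := by
  refine hz.norm_sub_le hv hK hμ ((norm_nonneg _).trans (hφ t ht)) (fun s hs => ?_) ht
  calc ‖φ s - B s (v s)‖ = ‖B s (z s - v s) + (φ s - B s (z s))‖ := by rw [map_sub]; abel_nf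
    _ ≤ L * ‖z s - v s‖ + b :=
      norm_add_le_of_le ((B s).le_of_opNorm_le (hB s hs) _) (hφ s hs)

lemma IsDuhamelSolution.exists_norm_sub_sub_linearization_le [CompleteSpace Y] [CompleteSpace W]
    {a C : ℝ}
    (hx : IsDuhamelSolution K t₀ T p (fun s => f s (x s)) x) (hK : IsDuhamelKernel K) (hT : 0 ≤ T)
    (hμ : IsContractionRate K T L μ) (hf : Continuous (uncurry f))
    (hfL : ∀ s ∈ Icc t₀ (t₀ + T),
      LipschitzOnWith L (f s) (closedBall (x s) (2 * Real.exp (μ * T) * a)))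
    (hB : ∀ s ∈ Icc t₀ (t₀ + T), ‖B s‖ ≤ L) (hC : 0 ≤ C)
    (hfB : ∀ s ∈ Icc t₀ (t₀ + T), ∀ y, ‖y‖ ≤ 2 * Real.exp (μ * T) * a →
      ‖f s (x s + y) - f s (x s) - B s y‖ ≤ C * ‖y‖ ^ 2)
    (hqc : ContinuousOn q (Icc t₀ (t₀ + T))) (hq : ∀ t ∈ Icc t₀ (t₀ + T), ‖q t‖ ≤ a)
    (hv : IsDuhamelSolution K t₀ T q (fun s => B s (v s)) v) :
    ∃ y, IsDuhamelSolution K t₀ T (fun t => p t + q t) (fun s => f s (y s)) y ∧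
      ∀ t ∈ Icc t₀ (t₀ + T), ‖y t - x t - v t‖ ≤
        2 * Real.exp (μ * T) * (C * (2 * Real.exp (μ * T) * a) ^ 2) := by
  obtain ⟨z, hz, hza⟩ := exists_isDuhamelSolution_increment hx.1 hK hT hμ hf hfL hqc hq
  refine ⟨fun t => x t + z t, by simpa using hx.add hz, fun t ht => ?_⟩
  rw [add_sub_cancel_left]
  refine hz.norm_sub_linearization_le hv hK hμ hB (fun s hs => ?_) ht
  exact (hfB s hs _ (hza s hs)).trans (by gcongr; exact hza s hs)

end Perturbation

end Duhamel

theorem variational_equation_frechet_derivative_general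
    {Y W : Type*} [NormedAddCommGroup Y] [NormedSpace ℝ Y] [CompleteSpace Y]
    [NormedAddCommGroup W] [NormedSpace ℝ W] [CompleteSpace W]
    {S : ℝ → Y →L[ℝ] Y} (hS0 : S 0 = ContinuousLinearMap.id ℝ Y)
    (hS_cont : ∀ y, ContinuousOn (fun t => S t y) (Ici 0))
    {K : ℝ → W →L[ℝ] Y} (hK : IsDuhamelKernel K)
    {f : ℝ → Y → W} (hf_cont : Continuous (uncurry f)) {Df : ℝ → Y → Y →L[ℝ] W}
    (hDf : ∀ t x, HasFDerivAt (f t) (Df t x) x) (hDf_cont : Continuous (uncurry Df))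
    (hDf_bound : ∀ R : ℝ, 0 < R → ∃ C₂ > (0 : ℝ), ∃ lam₂ > (0 : ℝ),
      (∀ (t : ℝ) (x h : Y), ‖x‖ ≤ R → ‖h‖ ≤ lam₂ →
        ‖f t (x + h) - f t x - Df t x h‖ ≤ C₂ * ‖h‖ ^ 2) ∧
      (∀ (t : ℝ) (x : Y), ‖x‖ ≤ R → ‖Df t x‖ ≤ C₂))
    {R T : ℝ} (hR : 0 < R) (hT : 0 ≤ T) :
    ∃ C₃ > (0 : ℝ), ∃ lam₃ > (0 : ℝ), ∀ (t₀ : ℝ) (x0 : Y) (x : ℝ → Y),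
      IsMildSolution S K f t₀ T x0 x → (∀ t ∈ Icc t₀ (t₀ + T), ‖x t‖ ≤ R) →
      ∃ V : ℝ → Y →L[ℝ] Y,
        (∀ h0 : Y,
          IsDuhamelSolution K t₀ T (fun t => S (t - t₀) h0) (fun s => Df s (x s) (V s h0))
            (fun t => V t h0) ∧
          ∀ h : ℝ → Y,
            IsDuhamelSolution K t₀ T (fun t => S (t - t₀) h0) (fun s => Df s (x s) (h s)) h →
            EqOn h (fun t => V t h0) (Icc t₀ (t₀ + T))) ∧
        (∀ t ∈ Icc t₀ (t₀ + T), ‖V t‖ ≤ C₃) ∧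
        (∀ h0 : Y, ‖h0‖ ≤ lam₃ → ∃ y : ℝ → Y, IsMildSolution S K f t₀ T (x0 + h0) y ∧
          ∀ t ∈ Icc t₀ (t₀ + T), ‖y t - x t - V t h0‖ ≤ C₃ * ‖h0‖ ^ 2) := by
  obtain ⟨C, hC, lam, hlam, htaylor, hDfC⟩ := hDf_bound (R + 1) (by positivity)
  lift C to ℝ≥0 using hC.le
  obtain ⟨M, hM, hS⟩ := exists_opNorm_comp_sub_le (T := T) hS_cont
  obtain ⟨μ, hμ⟩ := hK.exists_isContractionRate T C
  set A := 2 * Real.exp (μ * T)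
  have hA : 0 < A := by positivity
  refine ⟨A * M + A * (C * (A * M) ^ 2), by positivity, min 1 lam / (A * M), by positivity,
    fun t₀ x0 x hx hxR => ?_⟩
  have hxR' (t) (ht : t ∈ Icc t₀ (t₀ + T)) : ‖x t‖ ≤ R + 1 := (hxR t ht).trans (by linarith)
  have hB (t) (ht : t ∈ Icc t₀ (t₀ + T)) : ‖Df t (x t)‖ ≤ C := hDfC t _ (hxR' t ht)
  obtain ⟨V, hV, hVM⟩ := exists_propagator hK hT hμ
    (hDf_cont.comp_continuousOn (continuousOn_id.prodMk hx.1)) hB (hS t₀).1 (hS t₀).2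
  refine ⟨V, fun h0 => ⟨hV h0, fun h hh => hh.eqOn (hV h0) hK hμ fun t ht => ?_⟩,
    fun t ht => (hVM t ht).trans (le_add_of_nonneg_right (by positivity)), fun h0 hh0 => ?_⟩
  · simpa using (Df t (x t)).le_of_opNorm_le (hB t ht) (h t - V t h0)
  have hsmall : A * (M * ‖h0‖) ≤ min 1 lam := by
    rwa [← mul_assoc, ← le_div_iff₀' (by positivity)]
  simp_rw [isMildSolution_iff_isDuhamelSolution hT hS0, map_add] at hx ⊢
  obtain ⟨y, hy, hyx⟩ := hx.exists_norm_sub_sub_linearization_le hK hT hμ hf_cont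
    (fun s hs => (lipschitzOnWith_closedBall_of_hasFDerivAt (hDf s) (hDfC s) (hxR s hs)).mono
      (closedBall_subset_closedBall (hsmall.trans (min_le_left _ _))))
    hB C.2 (fun s hs k hk => htaylor s _ k (hxR' s hs) (hk.trans (hsmall.trans (min_le_right _ _))))
    ((hS t₀).1 h0) (fun t ht => (S (t - t₀)).le_of_opNorm_le ((hS t₀).2 t ht) h0) (hV h0)
  refine ⟨y, hy, fun t ht => ?_⟩
  calc ‖y t - x t - V t h0‖ ≤ A * (C * (A * (M * ‖h0‖)) ^ 2) := hyx t ht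
    _ = A * (C * (A * M) ^ 2) * ‖h0‖ ^ 2 := by ring
    _ ≤ (A * M + A * (C * (A * M) ^ 2)) * ‖h0‖ ^ 2 := by
      gcongr
      exact le_add_of_nonneg_left (by positivity)

/-- Differentiability of the solution with respect to the initial datum.
Under the additional assumptions that `f(t,·)` is Fréchet differentiable with derivative
`Df(t,x) ∈ L(Y;W)` depending continuously on `(t,x)` and satisfying the quadratic Taylor
bound and the uniform bound, for every `R, T > 0` there exist `C₃(R,T) > 0` and
`λ₃(R,T) > 0` such that: whenever `x` is a mild solution on `[t₀, t₀+T]` with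
`‖x(t)‖ ≤ R` there, then
(i) for every `h⁰ ∈ Y` there is a unique continuous `h` on `[t₀, t₀+T]` with
`h t = S (t−t₀) h⁰ + ∫_{t₀}^t T' (t−s) (Df s (x s) (h s)) ds`;
(ii) for each `t`, the map `V t : h⁰ ↦ h(t)` is a bounded linear operator with
`‖V t‖ ≤ C₃(R,T)`;
(iii) for every `h⁰` with `‖h⁰‖ ≤ λ₃(R,T)` the mild solution `y` with
`y(t₀) = x(t₀) + h⁰` exists and satisfies `‖y t − x t − V t h⁰‖ ≤ C₃(R,T)‖h⁰‖²` on
`[t₀, t₀+T]`. -/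
theorem variational_equation_frechet_derivative
    {Y W : Type*} [NormedAddCommGroup Y] [NormedSpace ℝ Y] [CompleteSpace Y]
    [NormedAddCommGroup W] [NormedSpace ℝ W] [CompleteSpace W]
    (J : Y →L[ℝ] W) (hJ : Function.Injective J)
    (S : ℝ → Y →L[ℝ] Y)
    (hS0 : S 0 = ContinuousLinearMap.id ℝ Y)
    (hS_semigroup : ∀ s t : ℝ, 0 ≤ s → 0 ≤ t → S (t + s) = (S t).comp (S s))
    (hS_cont : ∀ y : Y, ContinuousOn (fun t => S t y) (Set.Ici (0 : ℝ)))
    (M₁ κ₁ : ℝ) (hM₁ : 0 < M₁) (hκ₁ : 0 < κ₁)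
    (hS_bound : ∀ t : ℝ, 0 ≤ t → ‖S t‖ ≤ M₁ * Real.exp (κ₁ * t))
    (T' : ℝ → W →L[ℝ] Y)
    (hT'J : ∀ t : ℝ, 0 < t → (T' t).comp J = S t)
    (hT'S : ∀ s t : ℝ, 0 < s → 0 < t → T' (t + s) = (S t).comp (T' s))
    (M₂ κ₂ γ : ℝ) (hM₂ : 0 < M₂) (hκ₂ : 0 < κ₂) (hγ0 : 0 ≤ γ) (hγ1 : γ < 1)
    (hT'_bound : ∀ t : ℝ, 0 < t → ‖T' t‖ ≤ M₂ * Real.exp (κ₂ * t) * t ^ (-γ))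
    (hT'_cont : ∀ w : W, ContinuousOn (fun t => T' t w) (Set.Ioi (0 : ℝ)))
    (f : ℝ → Y → W)
    (hf_cont : Continuous fun p : ℝ × Y => f p.1 p.2)
    (hf_lip : ∀ R : ℝ, 0 < R → ∃ C > (0 : ℝ), ∀ (t : ℝ) (x y : Y),
      ‖x‖ ≤ R → ‖y‖ ≤ R → ‖f t x - f t y‖ ≤ C * ‖x - y‖)
    (Df : ℝ → Y → Y →L[ℝ] W)
    (hDf : ∀ (t : ℝ) (x : Y), HasFDerivAt (f t) (Df t x) x)
    (hDf_cont : Continuous fun p : ℝ × Y => Df p.1 p.2)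
    (hDf_bound : ∀ R : ℝ, 0 < R → ∃ C₂ > (0 : ℝ), ∃ lam₂ > (0 : ℝ),
      (∀ (t : ℝ) (x h : Y), ‖x‖ ≤ R → ‖h‖ ≤ lam₂ →
        ‖f t (x + h) - f t x - Df t x h‖ ≤ C₂ * ‖h‖ ^ 2) ∧
      (∀ (t : ℝ) (x : Y), ‖x‖ ≤ R → ‖Df t x‖ ≤ C₂)) :
    ∀ R T : ℝ, 0 < R → 0 < T → ∃ C₃ > (0 : ℝ), ∃ lam₃ > (0 : ℝ),
      ∀ (t₀ : ℝ) (x0 : Y) (x : ℝ → Y),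
        IsMildSolution S T' f t₀ T x0 x →
        (∀ t ∈ Set.Icc t₀ (t₀ + T), ‖x t‖ ≤ R) →
        ∃ V : ℝ → Y →L[ℝ] Y,
          -- (i) existence and uniqueness of the solution of the variational equation
          (∀ h0 : Y,
            (ContinuousOn (fun t => V t h0) (Set.Icc t₀ (t₀ + T)) ∧
              (∀ t ∈ Set.Icc t₀ (t₀ + T),
                IntervalIntegrable (fun s => T' (t - s) (Df s (x s) (V s h0)))
                  MeasureTheory.volume t₀ t) ∧
              ∀ t ∈ Set.Icc t₀ (t₀ + T),
                V t h0 = S (t - t₀) h0 + ∫ s in t₀..t, T' (t - s) (Df s (x s) (V s h0))) ∧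
            ∀ h : ℝ → Y,
              ContinuousOn h (Set.Icc t₀ (t₀ + T)) →
              (∀ t ∈ Set.Icc t₀ (t₀ + T),
                IntervalIntegrable (fun s => T' (t - s) (Df s (x s) (h s)))
                  MeasureTheory.volume t₀ t) →
              (∀ t ∈ Set.Icc t₀ (t₀ + T),
                h t = S (t - t₀) h0 + ∫ s in t₀..t, T' (t - s) (Df s (x s) (h s))) →
              Set.EqOn h (fun t => V t h0) (Set.Icc t₀ (t₀ + T))) ∧
          -- (ii) uniform bound on the operator norm
          (∀ t ∈ Set.Icc t₀ (t₀ + T), ‖V t‖ ≤ C₃) ∧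
          -- (iii) quadratic estimate: V is the derivative of the flow at x0
          (∀ h0 : Y, ‖h0‖ ≤ lam₃ →
            ∃ y : ℝ → Y, IsMildSolution S T' f t₀ T (x0 + h0) y ∧
              ∀ t ∈ Set.Icc t₀ (t₀ + T),
                ‖y t - x t - V t h0‖ ≤ C₃ * ‖h0‖ ^ 2) := by
  intro R T hR hT
  simpa only [IsDuhamelSolution, and_imp] using
    variational_equation_frechet_derivative_general hS0 hS_cont
      (IsDuhamelKernel.of_norm_le_exp_mul_rpow hT'_cont hγ1 hT'_bound) hf_cont hDf hDf_cont
      hDf_bound hR hT.le
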